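/- arXiv:2504.20983 — 2 statements merged into one kernel-verified Lean document; each statement's English description precedes it below -/
import Mathlib

section
/- For every LTLf formula φ over a finite set of atoms AP, there exists a deterministic finite automaton over the alphabet 2^AP with at most 2^(2^|φ|) states whose language is exactly the set of finite non-empty traces over 2^AP that satisfy φ. -/
/-!
The truth value of a formula at a position of a trace is determined by the current letter and by
the set of its subformulas true at the next position (`φ U ψ` unfolds to `ψ ∨ (φ ∧ ○(φ U ψ))`).
The end of the trace is represented by the empty set, since both `○` and the unfolding of `U`
demand a next position. Hence the set of true subformulas is computed by a deterministic
transition function `step` on `2^(subf φ)` that reads the trace from right to left.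

Reversing this machine yields the automaton: after reading `u`, its state is the
set of all `X ⊆ subf φ` such that `φ` is true at the start of `u` whenever `X` is what holds
right after `u`. A word is accepted when `∅` belongs to that state. The states are the sets of
subsets of `subf φ`, so there are exactly `2^(2^|φ|)` of them; the empty word is rejected
because `φ ∉ ∅`.
-/

namespace MTG

attribute [local instance] Classical.propDecidable

/-- LTLf formulas over a set of atomic propositions `AP`. -/
inductive LTLf (AP : Type) : Type where
  | atom : AP → LTLf AP
  | conj : LTLf AP → LTLf AP → LTLf AP
  | neg  : LTLf AP → LTLf AP
  | next : LTLf AP → LTLf AP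
  | untl : LTLf AP → LTLf AP → LTLf AP
  deriving DecidableEq

namespace LTLf

/-- Satisfaction of an LTLf formula at position `i` of a finite trace `π` over `2^AP`. -/
def Sat {AP : Type} (π : List (Set AP)) : LTLf AP → ℕ → Prop
  | atom p, i => p ∈ π.getD i ∅
  | conj φ ψ, i => Sat π φ i ∧ Sat π ψ i
  | neg φ, i => ¬ Sat π φ i
  | next φ, i => i + 1 < π.length ∧ Sat π φ (i + 1)
  | untl φ ψ, i => ∃ j, i ≤ j ∧ j < π.length ∧ Sat π ψ j ∧
      ∀ k, i ≤ k → k < j → Sat π φ k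

/-- `π ⊨ φ`: the finite trace `π` is nonempty and satisfies `φ` at position `0`. -/
def Models {AP : Type} (π : List (Set AP)) (φ : LTLf AP) : Prop :=
  π ≠ [] ∧ Sat π φ 0

/-- The set of subformulas of an LTLf formula. -/
def subf {AP : Type} [DecidableEq AP] : LTLf AP → Finset (LTLf AP)
  | atom p => {atom p}
  | conj φ ψ => insert (conj φ ψ) (subf φ ∪ subf ψ)
  | neg φ => insert (neg φ) (subf φ)
  | next φ => insert (next φ) (subf φ)
  | untl φ ψ => insert (untl φ ψ) (subf φ ∪ subf ψ)

/-- The size `|φ|` of an LTLf formula: the number of its subformulas. -/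
def size {AP : Type} [DecidableEq AP] (φ : LTLf AP) : ℕ := (subf φ).card

end LTLf

namespace LTLf

theorem sat_cons_succ {AP : Type} (a : Set AP) (w : List (Set AP)) (ψ : LTLf AP) (i : ℕ) :
    Sat (a :: w) ψ (i + 1) ↔ Sat w ψ i := by
  induction ψ generalizing i with
  | atom p => simp [Sat]
  | conj φ ψ ih1 ih2 => simp [Sat, ih1, ih2]
  | neg φ ih => simp [Sat, ih]
  | next φ ih => simp [Sat, ih]
  | untl φ ψ ih1 ih2 =>
    simp only [Sat]
    constructor
    · rintro ⟨j, hij, hj, h1, h2⟩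
      obtain ⟨j, rfl⟩ : ∃ m, j = m + 1 := ⟨j - 1, by omega⟩
      refine ⟨j, by omega, by simpa using hj, (ih2 j).1 h1, fun k hk hkj => ?_⟩
      exact (ih1 k).1 (h2 (k + 1) (by omega) (by omega))
    · rintro ⟨j, hij, hj, h1, h2⟩
      refine ⟨j + 1, by omega, by simpa using hj, (ih2 j).2 h1, fun k hk hkj => ?_⟩
      obtain ⟨k, rfl⟩ : ∃ m, k = m + 1 := ⟨k - 1, by omega⟩
      exact (ih1 k).2 (h2 k (by omega) (by omega))

theorem sat_untl_cons {AP : Type} (a : Set AP) (w : List (Set AP)) (φ ψ : LTLf AP) :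
    Sat (a :: w) (untl φ ψ) 0 ↔
      Sat (a :: w) ψ 0 ∨ (Sat (a :: w) φ 0 ∧ Models w (untl φ ψ)) := by
  constructor
  · rintro ⟨j, -, hj, h1, h2⟩
    rcases j with _ | j
    · exact Or.inl h1
    · have hj' : j < w.length := by simpa using hj
      refine Or.inr ⟨h2 0 le_rfl (by omega), List.ne_nil_of_length_pos (by omega), j,
        by omega, hj', (sat_cons_succ a w ψ j).1 h1, fun k _ hk => ?_⟩
      exact (sat_cons_succ a w φ k).1 (h2 (k + 1) (by omega) (by omega))
  · rintro (h | ⟨h, -, j, -, hj, h1, h2⟩)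
    · exact ⟨0, le_rfl, by simp, h, fun k _ hk => by omega⟩
    · refine ⟨j + 1, by omega, by simpa using hj, (sat_cons_succ a w ψ j).2 h1, fun k _ hk => ?_⟩
      rcases k with _ | k
      · exact h
      · exact (sat_cons_succ a w φ k).2 (h2 k (by omega) (by omega))

/-- Truth of a formula at a position with letter `a`, given the set `X` of formulas true at the
next position (`X = ∅` when there is no next position). -/
def Holds {AP : Type} (a : Set AP) (X : Set (LTLf AP)) : LTLf AP → Prop
  | atom p => p ∈ a
  | conj φ ψ => Holds a X φ ∧ Holds a X ψ
  | neg φ => ¬ Holds a X φ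
  | next φ => φ ∈ X
  | untl φ ψ => Holds a X ψ ∨ (Holds a X φ ∧ untl φ ψ ∈ X)

theorem self_mem_subf {AP : Type} [DecidableEq AP] (φ : LTLf AP) : φ ∈ subf φ := by
  cases φ <;> simp [subf]

theorem subf_subset {AP : Type} [DecidableEq AP] (φ : LTLf AP) {ψ : LTLf AP}
    (h : ψ ∈ subf φ) : subf ψ ⊆ subf φ := by
  induction φ with
  | atom p => simp only [subf, Finset.mem_singleton] at h; rw [h]
  | conj φ₁ φ₂ ih1 ih2 | untl φ₁ φ₂ ih1 ih2 =>
    simp only [subf, Finset.mem_insert, Finset.mem_union] at h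
    rcases h with rfl | h | h
    · exact subset_rfl
    · intro x hx; simp [subf, ih1 h hx]
    · intro x hx; simp [subf, ih2 h hx]
  | neg φ ih | next φ ih =>
    simp only [subf, Finset.mem_insert] at h
    rcases h with rfl | h
    · exact subset_rfl
    · intro x hx; simp [subf, ih h hx]

theorem holds_iff {AP : Type} [DecidableEq AP] (a : Set AP) (w : List (Set AP))
    (X : Set (LTLf AP)) (ψ : LTLf AP) (h : ∀ χ ∈ subf ψ, χ ∈ X ↔ Models w χ) :
    Holds a X ψ ↔ Sat (a :: w) ψ 0 := by
  induction ψ with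
  | atom p => simp [Holds, Sat]
  | conj φ ψ ih1 ih2 =>
    simp only [Holds, Sat]
    rw [ih1 fun χ hχ => h χ (by simp [subf, hχ]), ih2 fun χ hχ => h χ (by simp [subf, hχ])]
  | neg φ ih =>
    simp only [Holds, Sat]
    rw [ih fun χ hχ => h χ (by simp [subf, hχ])]
  | next φ ih =>
    simp only [Holds, Sat]
    rw [h φ (by simp [subf, self_mem_subf]), sat_cons_succ, Models]
    simp [List.length_pos_iff]
  | untl φ ψ ih1 ih2 =>
    rw [sat_untl_cons, ← h _ (self_mem_subf _)]
    simp only [Holds]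
    rw [ih1 fun χ hχ => h χ (by simp [subf, hχ]), ih2 fun χ hχ => h χ (by simp [subf, hχ])]

/-- The right-to-left transition on sets of subformulas of `φ`: from the subformulas true at the
next position to those true at the current position, whose letter is `a`. -/
def step {AP : Type} [DecidableEq AP] (φ : LTLf AP) (a : Set AP) (X : Set (subf φ)) :
    Set (subf φ) :=
  {ψ | Holds a (Subtype.val '' X) ψ.1}

theorem foldr_step {AP : Type} [DecidableEq AP] (φ : LTLf AP) (w : List (Set AP)) :
    w.foldr (step φ) ∅ = {ψ | Models w ψ.1} := by
  induction w with
  | nil => simp [Models]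
  | cons a w ih =>
    ext ψ
    rw [List.foldr_cons, ih]
    simp only [step, Set.mem_ofPred_eq]
    rw [holds_iff a w]
    · simp [Models]
    · intro χ hχ
      simp [subf_subset φ ψ.2 hχ]

/-- The determinized reversal of `step φ`. A state is a set of sets of subformulas of `φ`; after
reading `u` it consists of the `X` from which reading `u` backwards makes `φ` true. -/
def toDFA {AP : Type} [DecidableEq AP] (φ : LTLf AP) : DFA (Set AP) (Set (Set (subf φ))) where
  step S a := {X | step φ a X ∈ S}
  start := {X | ⟨φ, self_mem_subf φ⟩ ∈ X}
  accept := {S | ∅ ∈ S}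

theorem mem_evalFrom_toDFA {AP : Type} [DecidableEq AP] (φ : LTLf AP) (w : List (Set AP))
    (S : Set (Set (subf φ))) (X : Set (subf φ)) :
    X ∈ (toDFA φ).evalFrom S w ↔ w.foldr (step φ) X ∈ S := by
  induction w generalizing S with
  | nil => simp
  | cons a w ih => rw [DFA.evalFrom_cons, ih]; rfl

end LTLf

/-- For every LTLf formula `φ` over a finite set of atoms `AP`, there is a DFA over
the alphabet `2^AP` with at most `2^(2^|φ|)` states whose language is exactly the
set of finite nonempty traces satisfying `φ`. -/
theorem ltlf_to_dfa (AP : Type) [Fintype AP] [DecidableEq AP] (φ : LTLf AP) :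
    ∃ (Q : Type) (inst : Fintype Q) (M : DFA (Set AP) Q),
      @Fintype.card Q inst ≤ 2 ^ 2 ^ LTLf.size φ ∧
      ∀ w : List (Set AP), w ∈ M.accepts ↔ LTLf.Models w φ := by
  refine ⟨Set (Set (LTLf.subf φ)), inferInstance, LTLf.toDFA φ, ?_, fun w => ?_⟩
  · simp [LTLf.size]
  · change ∅ ∈ (LTLf.toDFA φ).evalFrom (LTLf.toDFA φ).start w ↔ _
    rw [LTLf.mem_evalFrom_toDFA, LTLf.foldr_step]
    rfl

end MTG
end

section
/- Let P be a nondeterministic planning domain and φ an LTLf objective over the fluents of P. Every best-effort strategy for φ in P is an adaptive strategy for the single-objective multi-tier goal Φ = ⟨φ⟩ in P. -/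
/-! A best-effort strategy `σ` attains the value `valH D φ h` at each of its histories `h`; for a
single tier this is what adaptivity asks, since no winning-pending objective can exist.

The reason is a switching argument. Let `η` be a strategy for which `h` is a history and whose value
at `h` is larger than that of `σ`, and let `switch D h σ η` follow `η` on state sequences that extend
the state projection of `h`, and `σ` elsewhere. Two consistent histories of one strategy with the
same state projection are equal, because the strategy fixes the actions and then uniqueness of
reactions fixes the reactions (`eq_of_stateProj_eq`). Hence on plays of `σ` that avoid `h` the new
strategy behaves as `σ` (`isFinPlay_switch_of_not_prefix`), and on plays through `h` it behaves as
`η` (`isFinPlay_switch_of_prefix`). If `η` wins from `h`, or if `σ` loses from `h`, then the switched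
strategy dominates `σ`, and the gap in value makes the domination strict. The existence of plays
(`inGamma_of_consistent`) lets membership in `Γ_P(σ,h)` be reduced to consistency of `h`, a condition
on the strategy and one on the environment that can be recombined (`StepConsistent.mix`).
-/

namespace MTG

attribute [local instance] Classical.propDecidable

/-- A nondeterministic planning domain `P = (2^F, s0, Act, React, α, β, δ)`.
`δ` is modelled as a total function; its value is only relevant when
`a ∈ act s` and `r ∈ react s a` (the preconditions hold). -/
structure Domain (F Act React : Type) where
  s0 : Set F
  act : Set F → Set Act
  react : Set F → Act → Set React
  tr : Set F → Act → React → Set F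
  act_ex : ∀ s, ∃ a, a ∈ act s
  react_ex : ∀ s a, a ∈ act s → ∃ r, r ∈ react s a
  react_uniq : ∀ s a r₁ r₂, a ∈ act s → r₁ ∈ react s a → r₂ ∈ react s a →
      tr s a r₁ = tr s a r₂ → r₁ = r₂

/-- A finite trace `s0 (a1,r1,s1) ⋯ (an,rn,sn)` of a domain is represented by its
list of steps `(a_i, r_i, s_i)`; the initial state `s0` is implicit. -/
def lastState {F Act React : Type} (D : Domain F Act React)
    (h : List (Act × React × Set F)) : Set F :=
  h.getLast?.elim D.s0 (fun t => t.2.2)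

/-- Legal finite traces (histories) of a domain. -/
inductive IsLegal {F Act React : Type} (D : Domain F Act React) :
    List (Act × React × Set F) → Prop where
  | nil : IsLegal D []
  | snoc {h : List (Act × React × Set F)} {a : Act} {r : React} {s : Set F} :
      IsLegal D h → a ∈ D.act (lastState D h) → r ∈ D.react (lastState D h) a →
      s = D.tr (lastState D h) a r → IsLegal D (h ++ [(a, r, s)])

/-- Finite or infinite traces of a domain (again with `s0` implicit). -/
inductive PTrace (F Act React : Type) : Type where
  | fin : List (Act × React × Set F) → PTrace F Act React
  | inf : (ℕ → Act × React × Set F) → PTrace F Act React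

/-- The state projection `s0 s1 ⋯ sn` of a finite trace (a nonempty state sequence). -/
def stateProj {F Act React : Type} (D : Domain F Act React)
    (h : List (Act × React × Set F)) : List (Set F) :=
  D.s0 :: h.map (fun t => t.2.2)

/-- The action projection `a1 ⋯ an` of a finite trace. -/
def actProj {F Act React : Type} (h : List (Act × React × Set F)) : List Act :=
  h.map (fun t => t.1)

/-- The reaction projection `r1 ⋯ rn` of a finite trace. -/
def reactProj {F Act React : Type} (h : List (Act × React × Set F)) : List React :=
  h.map (fun t => t.2.1)

/-- An agent strategy is a partial function `(2^F)^+ → Act`; it is legal if whenever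
defined on the state projection of a legal trace it returns an action allowed by `α`. -/
def AgentLegal {F Act React : Type} (D : Domain F Act React)
    (σ : List (Set F) → Option Act) : Prop :=
  ∀ h, IsLegal D h → ∀ a, σ (stateProj D h) = some a → a ∈ D.act (lastState D h)

/-- An environment strategy is a total function `Act^+ → React`; it is legal if it
always returns a reaction allowed by `β`. -/
def EnvLegal {F Act React : Type} (D : Domain F Act React)
    (γ : List Act → React) : Prop :=
  ∀ h, IsLegal D h → ∀ a, a ∈ D.act (lastState D h) →
    γ (actProj h ++ [a]) ∈ D.react (lastState D h) a

/-- Each step of `h` is consistent with the agent strategy `σ` and environment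
strategy `γ`: `a_i = σ(s0⋯s_{i-1})` and `r_i = γ(a1⋯a_i)`. -/
def StepConsistent {F Act React : Type} (D : Domain F Act React)
    (σ : List (Set F) → Option Act) (γ : List Act → React)
    (h : List (Act × React × Set F)) : Prop :=
  ∀ h₁ a r s h₂, h = h₁ ++ (a, r, s) :: h₂ →
    σ (stateProj D h₁) = some a ∧ γ (actProj h₁ ++ [a]) = r

/-- `h` is the finite play of `σ` against `γ`: it is legal, consistent with both,
and `σ` is undefined at its end. -/
def IsFinPlay {F Act React : Type} (D : Domain F Act React)
    (σ : List (Set F) → Option Act) (γ : List Act → React)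
    (h : List (Act × React × Set F)) : Prop :=
  IsLegal D h ∧ StepConsistent D σ γ h ∧ σ (stateProj D h) = none

/-- The finite prefix of length `n` of an infinite trace. -/
def prefixList {F Act React : Type} (f : ℕ → Act × React × Set F) (n : ℕ) :
    List (Act × React × Set F) :=
  (List.range n).map f

/-- `τ` is the (finite or infinite) play `Play(σ,γ)`. -/
def IsPlay {F Act React : Type} (D : Domain F Act React)
    (σ : List (Set F) → Option Act) (γ : List Act → React) :
    PTrace F Act React → Prop
  | PTrace.fin h => IsFinPlay D σ γ h
  | PTrace.inf f => ∀ n, IsLegal D (prefixList f n) ∧ StepConsistent D σ γ (prefixList f n)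

/-- `h` is a prefix of the trace `τ`. -/
def TracePrefix {F Act React : Type} (h : List (Act × React × Set F)) :
    PTrace F Act React → Prop
  | PTrace.fin h' => h <+: h'
  | PTrace.inf f => h = prefixList f h.length

/-- `γ ∈ Γ_P(σ,h)`: `γ` is a legal environment strategy such that `h` is a prefix of
`Play(σ,γ)`. -/
def InGamma {F Act React : Type} (D : Domain F Act React)
    (σ : List (Set F) → Option Act) (h : List (Act × React × Set F))
    (γ : List Act → React) : Prop :=
  EnvLegal D γ ∧ ∃ τ, IsPlay D σ γ τ ∧ TracePrefix h τ

/-- `h ∈ H_P(σ)`: `h` is a history consistent with `σ` and some environment strategy. -/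
def InHist {F Act React : Type} (D : Domain F Act React)
    (σ : List (Set F) → Option Act) (h : List (Act × React × Set F)) : Prop :=
  IsLegal D h ∧ ∃ γ, InGamma D σ h γ

/-- A finite trace satisfies `φ` in `P` if its state projection satisfies `φ`. -/
def SatIn {F Act React : Type} (D : Domain F Act React) (φ : LTLf F)
    (h : List (Act × React × Set F)) : Prop :=
  LTLf.Models (stateProj D h) φ

/-- `L_P(φ)`: the set of legal traces of `P` satisfying `φ`. -/
def LP {F Act React : Type} (D : Domain F Act React) (φ : LTLf F) :
    Set (List (Act × React × Set F)) :=
  {h | IsLegal D h ∧ SatIn D φ h}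

/-- `Play(σ,γ)` is finite and satisfies `φ` in `P`. -/
def PlaysFinSat {F Act React : Type} (D : Domain F Act React)
    (σ : List (Set F) → Option Act) (γ : List Act → React) (φ : LTLf F) : Prop :=
  ∃ h, IsFinPlay D σ γ h ∧ SatIn D φ h

/-- `σ` is winning for (enforces) `φ` in `P`. -/
def WinningStrat {F Act React : Type} (D : Domain F Act React)
    (σ : List (Set F) → Option Act) (φ : LTLf F) : Prop :=
  ∀ γ, EnvLegal D γ → PlaysFinSat D σ γ φ

/-- `σ` is cooperative for `φ` in `P`. -/
def CoopStrat {F Act React : Type} (D : Domain F Act React)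
    (σ : List (Set F) → Option Act) (φ : LTLf F) : Prop :=
  ∃ γ, EnvLegal D γ ∧ PlaysFinSat D σ γ φ

/-- The three values `lose < pend < win`. -/
inductive Val : Type where
  | lose : Val
  | pend : Val
  | win : Val
  deriving DecidableEq

def Val.toNat : Val → ℕ
  | .lose => 0
  | .pend => 1
  | .win => 2

instance : LE Val := ⟨fun v w => v.toNat ≤ w.toNat⟩

/-- `val_{φ|P}(σ,h)`. -/
noncomputable def valS {F Act React : Type} (D : Domain F Act React) (φ : LTLf F)
    (σ : List (Set F) → Option Act) (h : List (Act × React × Set F)) : Val :=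
  if ∀ γ, InGamma D σ h γ → PlaysFinSat D σ γ φ then Val.win
  else if ∃ γ, InGamma D σ h γ ∧ PlaysFinSat D σ γ φ then Val.pend
  else Val.lose

/-- `val_{φ|P}(h)`: the maximum of `val_{φ|P}(σ,h)` over (legal) strategies `σ` with
`h ∈ H_P(σ)`. -/
noncomputable def valH {F Act React : Type} (D : Domain F Act React) (φ : LTLf F)
    (h : List (Act × React × Set F)) : Val :=
  if ∃ σ, AgentLegal D σ ∧ InHist D σ h ∧ valS D φ σ h = Val.win then Val.win
  else if ∃ σ, AgentLegal D σ ∧ InHist D σ h ∧ valS D φ σ h = Val.pend then Val.pend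
  else Val.lose

/-- `σ₁` dominates `σ₂` for `φ` in `P`. -/
def Dominates {F Act React : Type} (D : Domain F Act React) (φ : LTLf F)
    (σ₁ σ₂ : List (Set F) → Option Act) : Prop :=
  ∀ γ, EnvLegal D γ → PlaysFinSat D σ₂ γ φ → PlaysFinSat D σ₁ γ φ

/-- `σ₁` strictly dominates `σ₂` for `φ` in `P`. -/
def StrictDom {F Act React : Type} (D : Domain F Act React) (φ : LTLf F)
    (σ₁ σ₂ : List (Set F) → Option Act) : Prop :=
  Dominates D φ σ₁ σ₂ ∧ ¬ Dominates D φ σ₂ σ₁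

/-- `σ` is a best-effort strategy for `φ` in `P`: it is legal and no (legal) agent
strategy strictly dominates it. -/
def BestEffort {F Act React : Type} (D : Domain F Act React) (φ : LTLf F)
    (σ : List (Set F) → Option Act) : Prop :=
  AgentLegal D σ ∧ ∀ σ', AgentLegal D σ' → ¬ StrictDom D φ σ' σ

/-- `Φ = ⟨φ1, ⋯, φn⟩` is a multi-tier goal: `L_P(φ1) ⊇ ⋯ ⊇ L_P(φn)`. -/
def MultiTier {F Act React : Type} (D : Domain F Act React) {n : ℕ}
    (Φ : Fin n → LTLf F) : Prop :=
  ∀ i j : Fin n, i ≤ j → LP D (Φ j) ⊆ LP D (Φ i)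

/-- `φℓ` is the maximally winning objective of `Φ` wrt `h`. -/
def MaxWinObj {F Act React : Type} (D : Domain F Act React) {n : ℕ}
    (Φ : Fin n → LTLf F) (h : List (Act × React × Set F)) (ℓ : Fin n) : Prop :=
  valH D (Φ ℓ) h = Val.win ∧ ∀ j : Fin n, ℓ < j → valH D (Φ j) h ≠ Val.win

/-- `φk` is the maximally winning-pending objective of `Φ` wrt `h`, given that `φℓ`
is the maximally winning objective. -/
def MaxWinPendObj {F Act React : Type} (D : Domain F Act React) {n : ℕ}
    (Φ : Fin n → LTLf F) (h : List (Act × React × Set F)) (ℓ k : Fin n) : Prop :=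
  ℓ < k ∧
  (∃ σ, AgentLegal D σ ∧ InHist D σ h ∧
      valS D (Φ ℓ) σ h = Val.win ∧ valS D (Φ k) σ h = Val.pend) ∧
  ¬ ∃ η, AgentLegal D η ∧ InHist D η h ∧ valS D (Φ ℓ) η h = Val.win ∧
      ∃ j : Fin n, k < j ∧ valS D (Φ j) η h = Val.pend

/-- `φp` is the maximally pending objective of `Φ` wrt `h`. -/
def MaxPendObj {F Act React : Type} (D : Domain F Act React) {n : ℕ}
    (Φ : Fin n → LTLf F) (h : List (Act × React × Set F)) (p : Fin n) : Prop :=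
  valH D (Φ p) h = Val.pend ∧
  ∀ j : Fin n, p < j → valH D (Φ j) h ≠ Val.win ∧ valH D (Φ j) h ≠ Val.pend

/-- `σ` is an adaptive strategy for the multi-tier goal `Φ` in `P`. -/
def Adaptive {F Act React : Type} (D : Domain F Act React) {n : ℕ}
    (Φ : Fin n → LTLf F) (σ : List (Set F) → Option Act) : Prop :=
  ∀ h, InHist D σ h →
    ((∀ ℓ, MaxWinObj D Φ h ℓ →
        (((∃ k, MaxWinPendObj D Φ h ℓ k) →
            valS D (Φ ℓ) σ h = Val.win ∧
            ∀ k, MaxWinPendObj D Φ h ℓ k →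
              ∃ σ', AgentLegal D σ' ∧ valS D (Φ k) σ' h = Val.pend ∧
                σ (stateProj D h) = σ' (stateProj D h)) ∧
          ((¬ ∃ k, MaxWinPendObj D Φ h ℓ k) → valS D (Φ ℓ) σ h = Val.win))) ∧
     ((¬ ∃ ℓ, MaxWinObj D Φ h ℓ) → (¬ ∃ ℓ k, MaxWinPendObj D Φ h ℓ k) →
        ∀ p, MaxPendObj D Φ h p →
          ∃ σ', AgentLegal D σ' ∧ valS D (Φ p) σ' h = Val.pend ∧
            σ (stateProj D h) = σ' (stateProj D h)))

/-- Step consistency for reaction-based agent strategies `σ' : React^* → Act`. -/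
def StepConsistentR {F Act React : Type} (D : Domain F Act React)
    (σ' : List React → Option Act) (γ : List Act → React)
    (h : List (Act × React × Set F)) : Prop :=
  ∀ h₁ a r s h₂, h = h₁ ++ (a, r, s) :: h₂ →
    σ' (reactProj h₁) = some a ∧ γ (actProj h₁ ++ [a]) = r

/-- `τ` is the play of the reaction-based strategy `σ'` against `γ`. -/
def IsPlayR {F Act React : Type} (D : Domain F Act React)
    (σ' : List React → Option Act) (γ : List Act → React) :
    PTrace F Act React → Prop
  | PTrace.fin h => IsLegal D h ∧ StepConsistentR D σ' γ h ∧ σ' (reactProj h) = none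
  | PTrace.inf f => ∀ n, IsLegal D (prefixList f n) ∧ StepConsistentR D σ' γ (prefixList f n)

/-- A reaction-based strategy whose prescribed actions always satisfy the
preconditions `α`. -/
def AgentLegalR {F Act React : Type} (D : Domain F Act React)
    (σ' : List React → Option Act) : Prop :=
  ∀ h, IsLegal D h → ∀ a, σ' (reactProj h) = some a → a ∈ D.act (lastState D h)

/-! ### Plays and histories -/

section Switching

variable {F Act React : Type} {D : Domain F Act React} {φ : LTLf F}
  {σ η : List (Set F) → Option Act} {γ γ' : List Act → React}
  {h h' k : List (Act × React × Set F)}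

theorem isLegal_snoc {a : Act} {r : React} {s : Set F} (H : IsLegal D (h ++ [(a, r, s)])) :
    IsLegal D h ∧ a ∈ D.act (lastState D h) ∧ r ∈ D.react (lastState D h) a ∧
      s = D.tr (lastState D h) a r := by
  generalize hk : h ++ [(a, r, s)] = k at H
  cases H with
  | nil => simp at hk
  | snoc h1 h2 h3 h4 =>
    obtain ⟨rfl, hx⟩ := List.append_inj' hk rfl
    simp only [List.cons.injEq, Prod.mk.injEq, and_true] at hx
    obtain ⟨rfl, rfl, rfl⟩ := hx
    exact ⟨h1, h2, h3, h4⟩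

theorem IsLegal.of_append {l : List (Act × React × Set F)} (H : IsLegal D (h ++ l)) :
    IsLegal D h := by
  induction l using List.reverseRecOn with
  | nil => simpa using H
  | append_singleton l x ih =>
    obtain ⟨a, r, s⟩ := x
    rw [← List.append_assoc] at H
    exact ih (isLegal_snoc H).1

theorem StepConsistent.of_append {l : List (Act × React × Set F)}
    (H : StepConsistent D σ γ (h ++ l)) : StepConsistent D σ γ h := by
  intro h₁ a r s h₂ he
  exact H h₁ a r s (h₂ ++ l) (by simp [he])

theorem StepConsistent.snoc {a : Act} {r : React} {s : Set F} (H : StepConsistent D σ γ h)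
    (ha : σ (stateProj D h) = some a) (hr : γ (actProj h ++ [a]) = r) :
    StepConsistent D σ γ (h ++ [(a, r, s)]) := by
  intro h₁ a' r' s' h₂ he
  rcases List.eq_nil_or_concat h₂ with rfl | ⟨l, x, rfl⟩
  · obtain ⟨rfl, hx⟩ := List.append_inj' he rfl
    simp only [List.cons.injEq, Prod.mk.injEq, and_true] at hx
    obtain ⟨rfl, rfl, rfl⟩ := hx
    exact ⟨ha, hr⟩
  · have he' : h ++ [(a, r, s)] = (h₁ ++ (a', r', s') :: l) ++ [x] := by simp [he]
    exact H _ _ _ _ l (List.append_inj' he' rfl).1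

/-- Step consistency is a condition on the agent together with a condition on the environment, so
the two can be taken from different pairs. -/
theorem StepConsistent.mix (H : StepConsistent D σ γ h) (H' : StepConsistent D η γ' h) :
    StepConsistent D η γ h :=
  fun h₁ a r s h₂ he => ⟨(H' h₁ a r s h₂ he).1, (H h₁ a r s h₂ he).2⟩

/-- Consistent histories for a given pair of strategies are prefixes of the finite play. -/
theorem prefix_of_isFinPlay (hp : IsFinPlay D σ γ h') (hl : IsLegal D h)
    (hc : StepConsistent D σ γ h) : h <+: h' := by
  induction h using List.reverseRecOn with
  | nil => exact List.nil_prefix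
  | append_singleton k x ih =>
    obtain ⟨a, r, s⟩ := x
    obtain ⟨l1, -, -, l4⟩ := isLegal_snoc hl
    obtain ⟨c1, c2⟩ := hc k a r s [] rfl
    obtain ⟨l, rfl⟩ := ih l1 hc.of_append
    rcases l with _ | ⟨⟨a', r', s'⟩, l⟩
    · have := hp.2.2
      simp [c1] at this
    · obtain ⟨d1, d2⟩ := hp.2.1 k a' r' s' l rfl
      have hl' : IsLegal D (k ++ [(a', r', s')] ++ l) := by simpa using hp.1
      have m4 := (isLegal_snoc hl'.of_append).2.2.2
      obtain rfl : a = a' := by simpa [c1] using d1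
      obtain rfl : r = r' := c2.symm.trans d2
      obtain rfl : s = s' := l4.trans m4.symm
      exact ⟨l, by simp⟩

theorem consistent_of_inGamma (H : InGamma D σ h γ) : StepConsistent D σ γ h := by
  obtain ⟨-, τ | f, hp, ht⟩ := H
  · obtain ⟨l, rfl⟩ := ht
    exact hp.2.1.of_append
  · have ht : h = prefixList f h.length := ht
    rw [ht]
    exact (hp _).2

/-- Legal strategies always have a play, and it extends every consistent history. -/
theorem inGamma_of_consistent (hσ : AgentLegal D σ) (hγ : EnvLegal D γ) (hl : IsLegal D h)
    (hc : StepConsistent D σ γ h) : InGamma D σ h γ := by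
  refine ⟨hγ, ?_⟩
  by_cases hfin : ∃ k, IsFinPlay D σ γ k
  · obtain ⟨k, hk⟩ := hfin
    exact ⟨PTrace.fin k, hk, prefix_of_isFinPlay hk hl hc⟩
  -- Otherwise every consistent history can be prolonged by one step.
  have step : ∀ k : {k // IsLegal D k ∧ StepConsistent D σ γ k}, ∃ x,
      IsLegal D (k.1 ++ [x]) ∧ StepConsistent D σ γ (k.1 ++ [x]) := by
    rintro ⟨k, k1, k2⟩
    cases ha : σ (stateProj D k) with
    | none => exact absurd ⟨k, k1, k2, ha⟩ hfin
    | some a =>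
      have h1 := hσ k k1 a ha
      exact ⟨(a, γ (actProj k ++ [a]), _), k1.snoc h1 (hγ k k1 a h1) rfl, k2.snoc ha rfl⟩
  choose nxt hnxt using step
  let g : ℕ → {k // IsLegal D k ∧ StepConsistent D σ γ k} := fun n =>
    Nat.rec ⟨[], IsLegal.nil, by intro h₁ a r s h₂ he; simp at he⟩
      (fun _ k => ⟨k.1 ++ [nxt k], hnxt k⟩) n
  have hg : ∀ n, prefixList (fun n => nxt (g n)) n = (g n).1 := by
    intro n
    induction n with
    | zero => rfl
    | succ n ih =>
      change (List.range (n + 1)).map _ = (g n).1 ++ [nxt (g n)]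
      rw [List.range_succ, List.map_append, ← ih]
      rfl
  refine ⟨PTrace.inf fun n => nxt (g n), fun n => by rw [hg]; exact (g n).2, ?_⟩
  change h = prefixList _ h.length
  -- Both `h` and the prefixes of `f` are consistent, so they agree step by step.
  generalize (fun n => nxt (g n)) = f at hg
  have hf : ∀ n, IsLegal D (prefixList f n) ∧ StepConsistent D σ γ (prefixList f n) :=
    fun n => by rw [hg]; exact (g n).2
  clear hg
  induction h using List.reverseRecOn with
  | nil => rfl
  | append_singleton k x ih =>
    obtain ⟨a, r, s⟩ := x
    obtain ⟨l1, -, -, l4⟩ := isLegal_snoc hl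
    obtain ⟨c1, c2⟩ := hc k a r s [] rfl
    have ihk := ih l1 hc.of_append
    have e : prefixList f (k.length + 1) = k ++ [f k.length] := by
      conv_rhs => rw [ihk]
      simp [prefixList, List.range_succ]
    obtain ⟨m1, m2⟩ := hf (k.length + 1)
    rw [List.length_append, List.length_singleton, e]
    rw [e] at m1 m2
    generalize f k.length = y at m1 m2 ⊢
    obtain ⟨a', r', s'⟩ := y
    obtain ⟨d1, d2⟩ := m2 k a' r' s' [] rfl
    have m4 := (isLegal_snoc m1).2.2.2
    obtain rfl : a = a' := by simpa [c1] using d1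
    obtain rfl : r = r' := c2.symm.trans d2
    rw [l4, m4]

/-- Among the histories of one agent strategy, the state projection determines the history. -/
theorem eq_of_stateProj_eq (hl : IsLegal D h) (hc : StepConsistent D σ γ h) (kl : IsLegal D k)
    (kc : StepConsistent D σ γ' k) (e : stateProj D h = stateProj D k) : h = k := by
  induction h using List.reverseRecOn generalizing k with
  | nil =>
    have : k = [] := by simpa [stateProj] using e.symm
    exact this.symm
  | append_singleton h x ih =>
    rcases List.eq_nil_or_concat k with rfl | ⟨k, y, rfl⟩
    · simp [stateProj] at e
    obtain ⟨a, r, s⟩ := x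
    obtain ⟨a', r', s'⟩ := y
    rw [List.concat_eq_append] at *
    obtain ⟨l1, l2, l3, l4⟩ := isLegal_snoc hl
    obtain ⟨m1, m2, m3, m4⟩ := isLegal_snoc kl
    have e' : stateProj D h ++ [s] = stateProj D k ++ [s'] := by simpa [stateProj] using e
    obtain ⟨e1, e2⟩ := List.append_inj' e' rfl
    obtain rfl := ih l1 hc.of_append m1 kc.of_append e1
    obtain rfl : s = s' := by simpa using e2
    have d1 := (hc h a r s [] rfl).1
    have d2 := (kc h a' r' s [] rfl).1
    obtain rfl : a = a' := by simpa [d1] using d2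
    obtain rfl : r = r' := D.react_uniq _ a r r' l2 l3 m3 (l4.symm.trans m4)
    rfl

/-! ### Switching strategies at a history -/

/-- The strategy that follows `η` on state sequences extending the state projection of `h`, and
`σ` on all others. -/
noncomputable def switch (D : Domain F Act React) (h : List (Act × React × Set F))
    (σ η : List (Set F) → Option Act) : List (Set F) → Option Act :=
  fun π => if stateProj D h <+: π then η π else σ π

theorem agentLegal_switch (hσ : AgentLegal D σ) (hη : AgentLegal D η) :
    AgentLegal D (switch D h σ η) := by
  intro k hk a ha
  unfold switch at ha
  split_ifs at ha
  · exact hη k hk a ha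
  · exact hσ k hk a ha

theorem isFinPlay_switch_of_not_prefix (hl : IsLegal D h) (hc : StepConsistent D σ γ' h)
    (hp : IsFinPlay D σ γ h') (hn : ¬ h <+: h') : IsFinPlay D (switch D h σ η) γ h' := by
  have key : ∀ k l, h' = k ++ l → switch D h σ η (stateProj D k) = σ (stateProj D k) := by
    intro k l he
    refine if_neg fun hpre => hn ?_
    have hlen : h.length ≤ k.length := by simpa [stateProj] using hpre.length_le
    -- The prefix of `k` of length `h.length` has the state projection of `h`.
    have hs : stateProj D h = stateProj D (k.take h.length) := by
      have := List.prefix_iff_eq_take.1 hpre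
      rw [this]
      simp [stateProj]
    have hk : h' = k.take h.length ++ (k.drop h.length ++ l) := by
      rw [← List.append_assoc, List.take_append_drop, he]
    have hpl := hp.1
    have hpc := hp.2.1
    rw [hk] at hpl hpc
    rw [eq_of_stateProj_eq hl hc hpl.of_append hpc.of_append hs, hk]
    exact List.prefix_append _ _
  refine ⟨hp.1, fun h₁ a r s h₂ he => ?_, ?_⟩
  · rw [key h₁ _ he]
    exact hp.2.1 h₁ a r s h₂ he
  · rw [key h' [] (by simp)]
    exact hp.2.2

theorem isFinPlay_switch_of_prefix (hc : StepConsistent D σ γ' h)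
    (hp : IsFinPlay D η γ h') (hpre : h <+: h') : IsFinPlay D (switch D h σ η) γ h' := by
  have key : ∀ k, h <+: k → switch D h σ η (stateProj D k) = η (stateProj D k) := by
    intro k hk
    refine if_pos ?_
    obtain ⟨l, rfl⟩ := hk
    exact ⟨l.map fun t => t.2.2, by simp [stateProj]⟩
  refine ⟨hp.1, fun h₁ a r s h₂ he => ⟨?_, (hp.2.1 h₁ a r s h₂ he).2⟩, ?_⟩
  · by_cases hk : h <+: h₁
    · rw [key h₁ hk]
      exact (hp.2.1 h₁ a r s h₂ he).1
    · -- `h₁` is a proper prefix of `h`, so `σ` still decides, and `h` prescribes the action `a`.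
      obtain ⟨l, rfl⟩ : h₁ <+: h :=
        (List.prefix_or_prefix_of_prefix hpre ⟨_, he.symm⟩).resolve_left hk
      rcases l with _ | ⟨y, l⟩
      · simp at hk
      obtain ⟨m, hm⟩ := hpre
      have hy : y = (a, r, s) := by
        rw [he] at hm
        simp only [List.append_assoc, List.cons_append, List.append_cancel_left_eq,
          List.cons.injEq] at hm
        exact hm.1
      subst hy
      have hneg : ¬ stateProj D (h₁ ++ (a, r, s) :: l) <+: stateProj D h₁ := by
        intro hq
        have := hq.length_le
        simp [stateProj] at this
      rw [switch, if_neg hneg]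
      exact (hc h₁ a r s l rfl).1
  · rw [key h' hpre]
    exact hp.2.2

/-- Through `h`, the switched strategy achieves whatever `η` achieves. -/
theorem playsFinSat_switch (hl : IsLegal D h) (hc : StepConsistent D σ γ' h)
    (hcη : StepConsistent D η γ h) (H : PlaysFinSat D η γ φ) :
    PlaysFinSat D (switch D h σ η) γ φ := by
  obtain ⟨h', hp, hs⟩ := H
  exact ⟨h', isFinPlay_switch_of_prefix hc hp (prefix_of_isFinPlay hp hl hcη), hs⟩

/-! ### Best-effort strategies attain the value of each history -/

/-- A best-effort strategy admits no strict improvement by switching at one of its histories `h`: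
if `η` succeeds against every environment in `Γ_P(σ,h)` against which `σ` succeeds, then `σ`
succeeds against every environment in `Γ_P(σ,h)` against which `η` does. -/
theorem BestEffort.not_improvable (hbe : BestEffort D φ σ) (hη : AgentLegal D η)
    (hσh : InHist D σ h) (hηh : InHist D η h)
    (hdom : ∀ γ, InGamma D σ h γ → PlaysFinSat D σ γ φ → PlaysFinSat D η γ φ)
    (hγ : InGamma D σ h γ) (hwin : PlaysFinSat D η γ φ) : PlaysFinSat D σ γ φ := by
  obtain ⟨hl, γ₁, hγ₁⟩ := hσh
  obtain ⟨-, γ₂, hγ₂⟩ := hηh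
  have cσ := consistent_of_inGamma hγ₁
  have cη := consistent_of_inGamma hγ₂
  by_contra hlose
  refine hbe.2 (switch D h σ η) (agentLegal_switch hbe.1 hη) ⟨?_, fun hd => hlose ?_⟩
  · rintro δ hδ ⟨h', hp, hs⟩
    by_cases hpre : h <+: h'
    · have hδσ : InGamma D σ h δ := ⟨hδ, PTrace.fin h', hp, hpre⟩
      exact playsFinSat_switch hl cσ ((consistent_of_inGamma hδσ).mix cη)
        (hdom δ hδσ ⟨h', hp, hs⟩)
    · exact ⟨h', isFinPlay_switch_of_not_prefix hl cσ hp hpre, hs⟩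
  · exact hd γ hγ.1 (playsFinSat_switch hl cσ ((consistent_of_inGamma hγ).mix cη) hwin)

/-- By symmetry, `Γ_P(σ,h)` is the same set for all legal strategies `σ` that have `h` as a
history. -/
theorem inGamma_transfer (hη : AgentLegal D η) (hηh : InHist D η h) (hγ : InGamma D σ h γ) :
    InGamma D η h γ := by
  obtain ⟨hl, γ₂, hγ₂⟩ := hηh
  exact inGamma_of_consistent hη hγ.1 hl
    ((consistent_of_inGamma hγ).mix (consistent_of_inGamma hγ₂))

theorem valS_eq_win : valS D φ σ h = Val.win ↔ ∀ γ, InGamma D σ h γ → PlaysFinSat D σ γ φ := by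
  unfold valS
  split_ifs with h1
  · exact iff_of_true rfl h1
  · exact iff_of_false nofun h1
  · exact iff_of_false nofun h1

theorem valS_eq_pend : valS D φ σ h = Val.pend ↔
    (¬ ∀ γ, InGamma D σ h γ → PlaysFinSat D σ γ φ) ∧
      ∃ γ, InGamma D σ h γ ∧ PlaysFinSat D σ γ φ := by
  unfold valS
  split_ifs with h1 h2
  · exact iff_of_false nofun fun H => H.1 h1
  · exact iff_of_true rfl ⟨h1, h2⟩
  · exact iff_of_false nofun fun H => h2 H.2

theorem BestEffort.valS_win (hbe : BestEffort D φ σ) (hσh : InHist D σ h)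
    (hv : valH D φ h = Val.win) : valS D φ σ h = Val.win := by
  obtain ⟨η, hη, hηh, hw⟩ : ∃ η, AgentLegal D η ∧ InHist D η h ∧ valS D φ η h = Val.win := by
    unfold valH at hv
    split_ifs at hv with h1
    exact h1
  rw [valS_eq_win] at hw ⊢
  intro γ hγ
  exact hbe.not_improvable hη hσh hηh (fun δ hδ _ => hw δ (inGamma_transfer hη hηh hδ)) hγ
    (hw γ (inGamma_transfer hη hηh hγ))

theorem BestEffort.valS_pend (hbe : BestEffort D φ σ) (hσh : InHist D σ h)
    (hv : valH D φ h = Val.pend) : valS D φ σ h = Val.pend := by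
  unfold valH at hv
  split_ifs at hv with h1 h2
  obtain ⟨η, hη, hηh, hw⟩ := h2
  obtain ⟨-, γ, hγ, hsat⟩ := valS_eq_pend.1 hw
  refine valS_eq_pend.2 ⟨fun hall => h1 ⟨σ, hbe.1, hσh, valS_eq_win.2 hall⟩, ?_⟩
  by_contra hlose
  have hγσ := inGamma_transfer hbe.1 hσh hγ
  -- If `σ` loses from `h`, the domination requirement through `h` is vacuous.
  exact hlose ⟨γ, hγσ, hbe.not_improvable hη hσh hηh
    (fun δ hδ hs => absurd ⟨δ, hδ, hs⟩ hlose) hγσ hsat⟩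

end Switching

/-- Every best-effort strategy for `φ` in `P` is an adaptive strategy for the
single-objective multi-tier goal `⟨φ⟩` in `P`. -/
theorem best_effort_adaptive_singleton (F Act React : Type)
    [Fintype F] [Fintype Act] [Fintype React]
    (D : Domain F Act React) (φ : LTLf F)
    (σ : List (Set F) → Option Act) (hbe : BestEffort D φ σ) :
    Adaptive D (fun _ : Fin 1 => φ) σ := by
  intro h hh
  refine ⟨fun ℓ hℓ => ⟨?_, fun _ => hbe.valS_win hh hℓ.1⟩, fun _ _ p hp =>
    ⟨σ, hbe.1, hbe.valS_pend hh hp.1, rfl⟩⟩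
  -- There is no tier above the only one.
  rintro ⟨k, hk, -⟩
  exact absurd hk (by simp [Subsingleton.elim ℓ k])

end MTG
end
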